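/- For every real number y and every natural number n, |sin y − (3·P_n(y/3) − 4·P_n(y/3)³)| ≤ 4·( |y|^{3n+3}/[3^{n+1}(n+1)!]³ + |y|^{2n+3}/[3^{n+1}(n+1)!]² ) + ((4/3)·y² + 3)·|y|^{n+1}/(3^{n+1}(n+1)!). -/

import Mathlib

/-!
Write `s = sin (y / 3)`, `p = sinTaylor n (y / 3)` and `e = s - p`. The triple-angle identity gives
`sin y - (3 p - 4 p ^ 3) = 3 e - 4 (s ^ 3 - p ^ 3) = 3 e - 12 s ^ 2 e + 12 s e ^ 2 - 4 e ^ 3`,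
and the claim follows from `|s| ≤ |y| / 3` together with the Lagrange remainder bound
`|e| ≤ |y / 3| ^ (n + 1) / (n + 1)!` (`abs_sin_sub_sinTaylor_le`). The latter uses that
`sinTaylor n` is the Taylor polynomial of order `n` of `sin` at `0`
(`taylorWithinEval_sin_eq_sinTaylor`) and that all derivatives of `sin` are bounded by `1`.
-/

open Real

/-- Taylor polynomial of sine: `P n y = ∑_{m=0}^{⌊(n-1)/2⌋} (-1)^m y^(2m+1)/(2m+1)!`
(empty sum when `n = 0`). -/
noncomputable def sinTaylor (n : ℕ) (y : ℝ) : ℝ :=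
  ∑ m ∈ Finset.range ((n + 1) / 2),
    (-1 : ℝ) ^ m * y ^ (2 * m + 1) / (Nat.factorial (2 * m + 1))

/-- Only the odd derivatives of `sin` survive at `0`, so `sinTaylor n`, which lists just the odd
terms, is the full Taylor polynomial of order `n`. -/
lemma taylorWithinEval_sin_eq_sinTaylor (n : ℕ) {x : ℝ} (hx : 0 ≠ x) :
    taylorWithinEval Real.sin n (Set.uIcc 0 x) 0 x = sinTaylor n x := by
  have hderiv (k : ℕ) : iteratedDerivWithin k Real.sin (Set.uIcc 0 x) 0 =
      iteratedDeriv k Real.sin 0 :=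
    iteratedDerivWithin_eq_iteratedDeriv (uniqueDiffOn_uIcc hx) Real.contDiff_sin.contDiffAt
      Set.left_mem_uIcc
  induction n with
  | zero => simp [sinTaylor]
  | succ n ih =>
    rw [taylorWithinEval_succ, ih, hderiv]
    obtain ⟨k, rfl | rfl⟩ := Nat.even_or_odd' n
    · have h1 : (2 * k + 1 + 1) / 2 = k + 1 := by omega
      have h2 : (2 * k + 1) / 2 = k := by omega
      rw [Real.iteratedDeriv_odd_sin]
      simp only [sinTaylor, h1, h2, Finset.sum_range_succ, Nat.factorial_succ]
      simp
      field_simp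
    · have h1 : (2 * k + 1 + 1 + 1) / 2 = k + 1 := by omega
      have h2 : (2 * k + 1 + 1) / 2 = k + 1 := by omega
      rw [show 2 * k + 1 + 1 = 2 * (k + 1) by ring, Real.iteratedDeriv_even_sin]
      simp only [sinTaylor, h1, h2, show 2 * (k + 1) = 2 * k + 1 + 1 by ring]
      simp

lemma abs_sin_sub_sinTaylor_le (n : ℕ) (x : ℝ) :
    |Real.sin x - sinTaylor n x| ≤ |x| ^ (n + 1) / (Nat.factorial (n + 1)) := by
  rcases eq_or_ne 0 x with rfl | hx
  · simp [sinTaylor]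
  · obtain ⟨t, -, ht⟩ := taylor_mean_remainder_lagrange_iteratedDeriv (n := n) hx
      Real.contDiff_sin.contDiffOn
    rw [taylorWithinEval_sin_eq_sinTaylor n hx] at ht
    rw [ht, abs_div, abs_mul, abs_pow, sub_zero, Nat.abs_cast]
    gcongr
    exact mul_le_of_le_one_left (by positivity) (Real.abs_iteratedDeriv_sin_le_one _ _)

theorem sin_triple_angle_approx_error (y : ℝ) (n : ℕ) :
    |Real.sin y - (3 * sinTaylor n (y / 3) - 4 * (sinTaylor n (y / 3)) ^ 3)| ≤
      4 * (|y| ^ (3 * n + 3) / ((3 : ℝ) ^ (n + 1) * (Nat.factorial (n + 1))) ^ 3 +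
           |y| ^ (2 * n + 3) / ((3 : ℝ) ^ (n + 1) * (Nat.factorial (n + 1))) ^ 2) +
      ((4 / 3) * y ^ 2 + 3) * |y| ^ (n + 1) / ((3 : ℝ) ^ (n + 1) * (Nat.factorial (n + 1))) := by
  set F : ℝ := (3 : ℝ) ^ (n + 1) * (Nat.factorial (n + 1)) with hF
  set s := Real.sin (y / 3) with hs
  set p := sinTaylor n (y / 3) with hp
  set E : ℝ := |y| ^ (n + 1) / F with hE
  have he : |s - p| ≤ E := by
    refine (abs_sin_sub_sinTaylor_le n (y / 3)).trans_eq ?_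
    rw [hE, hF, abs_div, div_pow, div_div, abs_of_pos (show (0 : ℝ) < 3 by norm_num)]
  have hsy : |s| ≤ |y| / 3 := by
    have h : |Real.sin (y / 3)| ≤ |y / 3| := Real.abs_sin_le_abs
    rwa [abs_div, abs_of_pos (show (0 : ℝ) < 3 by norm_num)] at h
  have hsin : Real.sin y = 3 * s - 4 * s ^ 3 := by
    rw [hs, ← Real.sin_three_mul]
    congr 1
    ring
  have hexpand : Real.sin y - (3 * p - 4 * p ^ 3) =
      3 * (s - p) - 12 * (s ^ 2 * (s - p)) + 12 * (s * (s - p) ^ 2) - 4 * (s - p) ^ 3 := by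
    rw [hsin]
    ring
  have hrhs : 4 * (|y| ^ (3 * n + 3) / F ^ 3 + |y| ^ (2 * n + 3) / F ^ 2) +
      ((4 / 3) * y ^ 2 + 3) * |y| ^ (n + 1) / F =
      3 * E + 12 * ((|y| / 3) ^ 2 * E) + 12 * (|y| / 3 * E ^ 2) + 4 * E ^ 3 := by
    rw [hE, ← sq_abs y]
    ring
  rw [hexpand, hrhs]
  calc _ ≤ 3 * |s - p| + 12 * (|s| ^ 2 * |s - p|) + 12 * (|s| * |s - p| ^ 2)
        + 4 * |s - p| ^ 3 := by
        have h1 := abs_sub (3 * (s - p) - 12 * (s ^ 2 * (s - p)) + 12 * (s * (s - p) ^ 2))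
          (4 * (s - p) ^ 3)
        have h2 := abs_add_le (3 * (s - p) - 12 * (s ^ 2 * (s - p))) (12 * (s * (s - p) ^ 2))
        have h3 := abs_sub (3 * (s - p)) (12 * (s ^ 2 * (s - p)))
        simp only [abs_mul, abs_pow, Nat.abs_ofNat] at h1 h2 h3 ⊢
        linarith
    _ ≤ _ := by gcongr
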